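/- Every integer greater than two can be written as the sum of a prime and a square-free number. -/

import Mathlib

/-!
A computation with bit masks writes every `2 < n < 2 ^ 22` as a prime at most `53` plus a
square-free number.

For `n ≥ 2 ^ 22`, choose a unit class `a` modulo `12` such that neither `3` nor `4` divides `n - p`
when `p ≡ a`. A Chebyshev-type inequality between counting functions of residue classes modulo `12`
bounds the sum of `log p` over the primes `p ≡ a` with `n / 41 < p ≤ n` from below. If no `n - p` is
square-free, each of these primes satisfies `q ^ 2 ∣ n - p` for some prime `5 ≤ q ≤ √n`, hence lies
in a progression of `J ≈ n / m` terms with difference `m = 12 * q ^ 2`. The product of such a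
progression is divisible by the part of `J!` coprime to `m`, and also by the product of the primes
in it that exceed `J`; since it is at most `m ^ J * J!`, the latter product is at most `m ^ J` times
the remaining part of `J!`. Summing over `q` contradicts the lower bound.
-/

open Finset intervalIntegral
open scoped ArithmeticFunction.vonMangoldt Chebyshev Nat

/-- The bit mask of the multiples of `d` below `d * 2 ^ t`, obtained by `t` doublings. -/
def multiplesMask (d : ℕ) : ℕ → ℕ
  | 0 => 1
  | t + 1 => multiplesMask d t ||| multiplesMask d t <<< (d * 2 ^ t)

theorem testBit_multiplesMask {d i : ℕ} (hd : d ∣ i) :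
    ∀ {t : ℕ}, i < d * 2 ^ t → (multiplesMask d t).testBit i
  | 0, hi => by
    obtain rfl := Nat.eq_zero_of_dvd_of_lt hd (by simpa using hi)
    simp [multiplesMask]
  | t + 1, hi => by
    rw [multiplesMask, Nat.testBit_or, Nat.testBit_shiftLeft, Bool.or_eq_true]
    rcases lt_or_ge i (d * 2 ^ t) with h | h
    · exact .inl (testBit_multiplesMask hd h)
    · have hlt : i - d * 2 ^ t < d * 2 ^ t := by rw [pow_succ, ← mul_assoc] at hi; omega
      have := testBit_multiplesMask (Nat.dvd_sub hd (dvd_mul_right d (2 ^ t))) hlt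
      simp [h, this]

/-- A bit mask whose bits below `N` are set at the multiples of `q ^ 2` for `q ∈ l`. -/
def squareMultiplesMask (N : ℕ) (l : List ℕ) : ℕ :=
  l.foldr (fun q r => r ||| multiplesMask (q ^ 2) (Nat.log2 (N / q ^ 2) + 1)) 0

theorem testBit_squareMultiplesMask {N k q : ℕ} {l : List ℕ} (hq : q ∈ l) (hdvd : q ^ 2 ∣ k)
    (hq0 : q ≠ 0) (hk : k < N) : (squareMultiplesMask N l).testBit k := by
  induction l with
  | nil => simp at hq
  | cons a l ih =>
    rw [squareMultiplesMask, List.foldr_cons, Nat.testBit_or, Bool.or_eq_true]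
    rcases List.mem_cons.1 hq with rfl | hq
    · refine .inr (testBit_multiplesMask hdvd (hk.trans ?_))
      rw [Nat.mul_comm, ← Nat.div_lt_iff_lt_mul (by positivity)]
      exact Nat.lt_log2_self
    · exact .inl (ih hq)

/-- The primes up to `53`: every `2 < n < 2 ^ 22` is a square-free number plus one of these. -/
def smallPrimes : List ℕ := [2, 3, 5, 7, 11, 13, 17, 19, 23, 29, 31, 37, 41, 43, 47, 53]

theorem prime_of_mem_smallPrimes : ∀ p ∈ smallPrimes, p.Prime := by
  norm_num [smallPrimes]

/-- The numbers `2 ≤ q < s` that survive trial division by `smallPrimes`. -/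
def trialPrimes (s : ℕ) : List ℕ :=
  (List.range s).filter fun q => 2 ≤ q ∧ ∀ p ∈ smallPrimes, p ∣ q → p = q

theorem mem_trialPrimes {q s : ℕ} (hq : q.Prime) (hqs : q < s) : q ∈ trialPrimes s := by
  simp only [trialPrimes, List.mem_filter, List.mem_range, decide_eq_true_eq]
  exact ⟨hqs, hq.two_le, fun p hp h =>
    (Nat.prime_dvd_prime_iff_eq (prime_of_mem_smallPrimes p hp) hq).1 h⟩

/-- For `N ≤ s ^ 2`, the bits of this mask are set at square-free numbers below `N` only. -/
def squarefreeMask (N s : ℕ) : ℕ := squareMultiplesMask N (trialPrimes s) ^^^ (2 ^ N - 1)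

theorem squarefree_of_testBit_squarefreeMask {N s k : ℕ} (hs : 2 < s) (hN : N ≤ s ^ 2)
    (hk : k < N) (hbit : (squarefreeMask N s).testBit k) : Squarefree k := by
  contrapose! hbit
  obtain ⟨q, hq, hqs, hdvd⟩ : ∃ q, q.Prime ∧ q < s ∧ q ^ 2 ∣ k := by
    rcases k.eq_zero_or_pos with rfl | hk0
    · exact ⟨2, Nat.prime_two, hs, dvd_zero _⟩
    · rw [Nat.squarefree_iff_prime_squarefree] at hbit
      push Not at hbit
      obtain ⟨q, hq, hdvd⟩ := hbit
      rw [← sq] at hdvd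
      exact ⟨q, hq, lt_of_pow_lt_pow_left₀ 2 zero_le
        ((Nat.le_of_dvd hk0 hdvd).trans_lt (hk.trans_le hN)), hdvd⟩
  have := testBit_squareMultiplesMask (mem_trialPrimes hq hqs) hdvd hq.ne_zero hk
  simp [squarefreeMask, Nat.testBit_two_pow_sub_one, this, hk]

/-- The bit mask of the sums of an element of the list `ps` and a position of a set bit of `S`. -/
def shiftsMask (S : ℕ) (ps : List ℕ) : ℕ := ps.foldr (fun p r => r ||| S <<< p) 0

theorem exists_mem_of_testBit_shiftsMask {S n : ℕ} {ps : List ℕ}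
    (h : (shiftsMask S ps).testBit n) : ∃ p ∈ ps, p ≤ n ∧ S.testBit (n - p) := by
  induction ps with
  | nil => simp [shiftsMask] at h
  | cons a ps ih =>
    rw [shiftsMask, List.foldr_cons, Nat.testBit_or, Nat.testBit_shiftLeft, Bool.or_eq_true,
      Bool.and_eq_true, decide_eq_true_eq] at h
    rcases h with h | ⟨ha, h⟩
    · obtain ⟨p, hp, hpn⟩ := ih h
      exact ⟨p, List.mem_cons_of_mem a hp, hpn⟩
    · exact ⟨a, List.mem_cons_self, ha, h⟩

-- The bits of `7` stand for the excluded values `n = 0, 1, 2`.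
set_option maxRecDepth 100000 in
theorem shiftsMask_squarefreeMask_two_pow :
    shiftsMask (squarefreeMask (2 ^ 22) (2 ^ 11)) smallPrimes % 2 ^ 2 ^ 22 ||| 7 =
      2 ^ 2 ^ 22 - 1 := by
  decide +kernel

theorem exists_prime_add_squarefree_of_lt_two_pow {n : ℕ} (hn : 2 < n) (hlt : n < 2 ^ 22) :
    ∃ p k : ℕ, p.Prime ∧ Squarefree k ∧ n = p + k := by
  have h7 : Nat.testBit 7 n = false :=
    Nat.testBit_lt_two_pow (lt_of_lt_of_le (by norm_num) (Nat.pow_le_pow_right two_pos hn))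
  have hbit := congrArg (Nat.testBit · n) shiftsMask_squarefreeMask_two_pow
  simp only [Nat.testBit_or, Nat.testBit_mod_two_pow, Nat.testBit_two_pow_sub_one, h7,
    decide_eq_true hlt, Bool.or_false, Bool.true_and] at hbit
  obtain ⟨p, hp, hpn, hbit⟩ := exists_mem_of_testBit_shiftsMask hbit
  exact ⟨p, n - p, prime_of_mem_smallPrimes p hp,
    squarefree_of_testBit_squarefreeMask (by norm_num) (by norm_num) (by omega) hbit, by omega⟩

theorem exists_coprime_eq_prod_primeFactors_mul {m n : ℕ} (hm : m ≠ 0) (hn : n ≠ 0) :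
    ∃ D, m.Coprime D ∧ n = (∏ p ∈ m.primeFactors, p ^ n.factorization p) * D := by
  refine ⟨∏ p ∈ n.primeFactors \ m.primeFactors, p ^ n.factorization p, ?_, ?_⟩
  · refine Nat.Coprime.prod_right fun p hp => Nat.Coprime.pow_right _ ?_
    simp only [mem_sdiff, Nat.mem_primeFactors] at hp
    have hpm : ¬ p ∣ m := fun h => hp.2 ⟨hp.1.1, h, hm⟩
    exact ((Nat.Prime.coprime_iff_not_dvd hp.1.1).2 hpm).symm
  · rw [← prod_union disjoint_sdiff, union_sdiff_self_eq_union]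
    conv_lhs => rw [← Nat.prod_factorization_pow_eq_self hn]
    refine prod_subset subset_union_right fun p _ hp => ?_
    simp only [Finsupp.notMem_support_iff.1 hp, pow_zero]

theorem dvd_prod_range_add_mul {D m J : ℕ} (hD : D ∣ J !) (hm : m.Coprime D) (r : ℕ) :
    D ∣ ∏ i ∈ range J, (r + i * m) := by
  have : NeZero D := ⟨ne_zero_of_dvd_ne_zero J.factorial_ne_zero hD⟩
  obtain ⟨u, hu⟩ : ∃ u : ℕ, (m : ZMod D) * u = 1 :=
    ⟨(m : ZMod D)⁻¹.val, by rw [ZMod.natCast_zmod_val, ZMod.coe_mul_inv_eq_one m hm]⟩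
  -- Multiplying the progression by `u` turns it into consecutive integers modulo `D`.
  have hasc : D ∣ ∏ i ∈ range J, (u * r + i) := by
    rw [← Nat.ascFactorial_eq_prod_range]
    exact hD.trans (Nat.factorial_dvd_ascFactorial _ _)
  have hprod : ((m ^ J * ∏ i ∈ range J, (u * r + i) : ℕ) : ZMod D) =
      (∏ i ∈ range J, (r + i * m) : ℕ) := by
    rw [← card_range J, ← prod_const, card_range, ← prod_mul_distrib]
    push_cast
    exact prod_congr rfl fun i _ => by linear_combination (r : ZMod D) * hu
  rw [← ZMod.natCast_eq_zero_iff, ← hprod, ZMod.natCast_eq_zero_iff]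
  exact hasc.mul_left _

theorem prod_range_add_mul_le {m r : ℕ} (hr : r ≤ m) (J : ℕ) :
    ∏ i ∈ range J, (r + i * m) ≤ m ^ J * J ! := by
  calc ∏ i ∈ range J, (r + i * m) ≤ ∏ i ∈ range J, m * (i + 1) :=
        prod_le_prod' fun i _ => by linarith
    _ = m ^ J * J ! := by
        rw [prod_mul_distrib, prod_const, card_range, prod_range_add_one_eq_factorial]

theorem factorization_factorial_mul_log_le {l : ℕ} (hl : l.Prime) (J : ℕ) :
    (J !).factorization l * Real.log l ≤ J * (Real.log l / (l - 1)) := by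
  have h : ((J !).factorization l : ℝ) ≤ J / (l - 1) := by
    have h1 := (Nat.cast_le (α := ℝ)).2 (Nat.factorization_factorial_le_div_pred hl J)
    refine h1.trans (Nat.cast_div_le.trans_eq ?_)
    rw [Nat.cast_pred hl.pos]
  calc _ ≤ J / (l - 1) * Real.log l := by gcongr
    _ = _ := by ring

/-- The weight `log m + ∑_{l ∣ m} log l / (l - 1)`, where `l` is prime: primes in a progression of
difference `m` contribute at most this much, per term of the progression, to the sum of `log p`. -/
noncomputable def progressionWeight (m : ℕ) : ℝ :=
  Real.log m + ∑ l ∈ m.primeFactors, Real.log l / (l - 1)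

theorem progressionWeight_nonneg (m : ℕ) : 0 ≤ progressionWeight m := by
  refine add_nonneg (Real.log_natCast_nonneg m) (sum_nonneg fun l hl => ?_)
  have : (1 : ℝ) < l := mod_cast (Nat.prime_of_mem_primeFactors hl).one_lt
  exact div_nonneg (Real.log_natCast_nonneg l) (by linarith)

section PrimesInProgression

variable {m : ℕ} {S : Finset ℕ}

theorem prod_primes_le_of_mem_progression {r J : ℕ} (hr : 0 < r) (hrm : r ≤ m)
    (hprime : ∀ p ∈ S, p.Prime) (hJ : ∀ p ∈ S, J < p) (hS : ∀ p ∈ S, ∃ i < J, p = r + i * m) :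
    ∏ p ∈ S, p ≤ m ^ J * ∏ l ∈ m.primeFactors, l ^ (J !).factorization l := by
  obtain ⟨D, hmD, hfac⟩ :=
    exists_coprime_eq_prod_primeFactors_mul (hr.trans_le hrm).ne' J.factorial_ne_zero
  have hD : D ∣ J ! := hfac ▸ dvd_mul_left _ _
  have hDS : D.Coprime (∏ p ∈ S, p) := Nat.Coprime.prod_right fun p hp =>
    (((hprime p hp).coprime_factorial_of_lt (hJ p hp)).coprime_dvd_right hD).symm
  have hSdvd : ∏ p ∈ S, p ∣ ∏ i ∈ range J, (r + i * m) :=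
    prod_primes_dvd _ (fun p hp => (hprime p hp).prime) fun p hp => by
      obtain ⟨i, hi, rfl⟩ := hS p hp
      exact dvd_prod_of_mem (fun i => r + i * m) (mem_range.2 hi)
  have hpos : 0 < ∏ i ∈ range J, (r + i * m) := prod_pos fun i _ => by positivity
  have hle := (Nat.le_of_dvd hpos
    (hDS.mul_dvd_of_dvd_of_dvd (dvd_prod_range_add_mul hD hmD r) hSdvd)).trans
    (prod_range_add_mul_le hrm J)
  refine Nat.le_of_mul_le_mul_left (hle.trans_eq ?_) (Nat.pos_of_dvd_of_pos hD J.factorial_pos)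
  conv_lhs => rw [hfac]
  ring

theorem sum_log_primes_le_of_mem_progression {r J : ℕ} (hr : 0 < r) (hrm : r ≤ m)
    (hprime : ∀ p ∈ S, p.Prime) (hJ : ∀ p ∈ S, J < p) (hS : ∀ p ∈ S, ∃ i < J, p = r + i * m) :
    ∑ p ∈ S, Real.log p ≤ J * progressionWeight m := by
  have hne : ∀ l ∈ m.primeFactors, ((l : ℝ) ^ (J !).factorization l) ≠ 0 := fun l hl =>
    pow_ne_zero _ (mod_cast (Nat.prime_of_mem_primeFactors hl).ne_zero)
  calc ∑ p ∈ S, Real.log p = Real.log (∏ p ∈ S, (p : ℝ)) :=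
        (Real.log_prod fun p hp => mod_cast (hprime p hp).ne_zero).symm
    _ ≤ Real.log (m ^ J * ∏ l ∈ m.primeFactors, (l : ℝ) ^ (J !).factorization l) := by
        refine Real.log_le_log (prod_pos fun p hp => mod_cast (hprime p hp).pos) ?_
        have := (Nat.cast_le (α := ℝ)).2 (prod_primes_le_of_mem_progression hr hrm hprime hJ hS)
        push_cast at this
        exact this
    _ = J * Real.log m + ∑ l ∈ m.primeFactors, (J !).factorization l * Real.log l := by
        rw [Real.log_mul (pow_ne_zero _ (mod_cast (hr.trans_le hrm).ne')) (prod_ne_zero_iff.2 hne),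
          Real.log_pow, Real.log_prod hne]
        simp only [Real.log_pow]
    _ ≤ J * progressionWeight m := by
        rw [progressionWeight, mul_add, mul_sum]
        exact add_le_add_right (sum_le_sum fun l hl =>
          factorization_factorial_mul_log_le (Nat.prime_of_mem_primeFactors hl) J) _

theorem sum_log_primes_le_of_modEq {a n : ℕ} (hm : 0 < m)
    (hprime : ∀ p ∈ S, p.Prime) (hmod : ∀ p ∈ S, p ≡ a [MOD m]) (hle : ∀ p ∈ S, p ≤ n)
    (hlt : ∀ p ∈ S, n / m + 1 < p) :
    ∑ p ∈ S, Real.log p ≤ ((n : ℝ) / m + 1) * progressionWeight m := by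
  have hS : ∀ p ∈ S, ∃ i < n / m + 1, p = ((a + m - 1) % m + 1) + i * m := fun p hp => by
    have hp1 := (hprime p hp).pos
    have hmod' : p - 1 ≡ a + m - 1 [MOD m] := by
      refine Nat.ModEq.add_right_cancel' 1 ?_
      rw [Nat.sub_add_cancel hp1, Nat.sub_add_cancel (by omega)]
      exact (hmod p hp).trans (by simp [Nat.ModEq])
    refine ⟨(p - 1) / m, Nat.lt_succ_of_le (Nat.div_le_div_right (by have := hle p hp; omega)), ?_⟩
    have := Nat.mod_add_div' (p - 1) m
    rw [hmod'] at this
    omega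
  calc ∑ p ∈ S, Real.log p ≤ (n / m + 1 : ℕ) * progressionWeight m :=
        sum_log_primes_le_of_mem_progression (Nat.succ_pos _) (Nat.mod_lt _ hm) hprime hlt hS
    _ ≤ ((n : ℝ) / m + 1) * progressionWeight m := by
        have := progressionWeight_nonneg m
        push_cast
        gcongr
        exact Nat.cast_div_le

end PrimesInProgression

/-- The residue class of `b` modulo `m`, restricted to `{1, …, y}`. -/
def residueUpTo (m : ℕ) (b : ZMod m) (y : ℕ) : Finset ℕ := {k ∈ Ioc 0 y | (k : ZMod m) = b}

theorem exists_pos_le_natCast_eq {m : ℕ} [NeZero m] (b : ZMod m) :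
    ∃ r : ℕ, 0 < r ∧ r ≤ m ∧ (r : ZMod m) = b :=
  ⟨(b - 1).val + 1, Nat.succ_pos _, ZMod.val_lt _, by simp⟩

theorem residueUpTo_natCast {m r : ℕ} (hr : 0 < r) (hrm : r ≤ m) (y : ℕ) :
    residueUpTo m r y = (range ((y + m - r) / m)).image fun i => r + m * i := by
  have hm : 0 < m := hr.trans_le hrm
  ext k
  simp only [residueUpTo, mem_filter, mem_Ioc, mem_image, mem_range, Nat.lt_iff_add_one_le,
    Nat.le_div_iff_mul_le hm]
  constructor
  · rintro ⟨⟨hk, hky⟩, hkr⟩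
    rw [ZMod.natCast_eq_natCast_iff] at hkr
    rcases le_or_gt r k with hrk | hrk
    · obtain ⟨i, hi⟩ := (Nat.modEq_iff_dvd' hrk).1 hkr.symm
      exact ⟨i, by rw [add_mul, one_mul, mul_comm, ← hi]; omega, by omega⟩
    · have := Nat.le_of_dvd (by omega) ((Nat.modEq_iff_dvd' hrk.le).1 hkr)
      omega
  · rintro ⟨i, hi, rfl⟩
    rw [add_mul, one_mul, mul_comm] at hi
    exact ⟨by omega, by simp⟩

theorem card_residueUpTo_natCast {m r : ℕ} (hr : 0 < r) (hrm : r ≤ m) (y : ℕ) :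
    #(residueUpTo m r y) = (y + m - r) / m := by
  rw [residueUpTo_natCast hr hrm, card_image_of_injective _ fun i j h => ?_, card_range]
  exact Nat.eq_of_mul_eq_mul_left (hr.trans_le hrm) (Nat.add_left_cancel h)

section LogSum

variable {r m : ℝ}

theorem monotoneOn_log_add_mul (hr : 0 < r) (hm : 0 < m) (K : ℕ) :
    MonotoneOn (fun x : ℝ => Real.log (r + m * x)) (Set.Icc 0 (0 + K)) := fun x hx y _ hxy =>
  Real.log_le_log (by have := hx.1; positivity) (by gcongr)

theorem integral_log_add_mul (hm : m ≠ 0) (K : ℕ) :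
    ∫ x in (0 : ℝ)..0 + K, Real.log (r + m * x) = (∫ x in r..r + m * K, Real.log x) / m := by
  rw [integral_comp_add_mul _ hm, mul_zero, add_zero, zero_add, smul_eq_mul, inv_mul_eq_div]

theorem sum_log_add_mul_le_integral (hr : 0 < r) (hm : 0 < m) (K : ℕ) :
    ∑ i ∈ range K, Real.log (r + m * i) ≤ (∫ x in r..r + m * K, Real.log x) / m := by
  simpa only [← integral_log_add_mul hm.ne', zero_add] using
    (monotoneOn_log_add_mul hr hm K).sum_le_integral

theorem integral_le_sum_log_add_mul (hr : 0 < r) (hm : 0 < m) (K : ℕ) :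
    (∫ x in r..r + m * K, Real.log x) / m ≤
      ∑ i ∈ range K, Real.log (r + m * (i + 1 : ℕ)) := by
  simpa only [← integral_log_add_mul hm.ne', zero_add] using
    (monotoneOn_log_add_mul hr hm K).integral_le_sum

theorem integral_log_nonneg {a b : ℝ} (ha : 1 ≤ a) (hab : a ≤ b) :
    0 ≤ ∫ x in a..b, Real.log x :=
  integral_nonneg hab fun _ hx => Real.log_nonneg (ha.trans hx.1)

theorem integral_log_le {a b : ℝ} (ha : 0 < a) (hab : a ≤ b) :
    ∫ x in a..b, Real.log x ≤ (b - a) * Real.log b := by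
  calc ∫ x in a..b, Real.log x ≤ ∫ _ in a..b, Real.log b :=
        integral_mono_on hab intervalIntegrable_log' intervalIntegrable_const fun x hx =>
          Real.log_le_log (ha.trans_le hx.1) hx.2
    _ = (b - a) * Real.log b := by rw [integral_const, smul_eq_mul]

end LogSum

theorem sum_log_residueUpTo_natCast {m r : ℕ} (hr : 0 < r) (hrm : r ≤ m) (y : ℕ) :
    ∑ k ∈ residueUpTo m r y, Real.log k =
      ∑ i ∈ range ((y + m - r) / m), Real.log (r + m * i) := by
  rw [residueUpTo_natCast hr hrm, sum_image fun i _ j _ h => ?_]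
  · simp
  · exact Nat.eq_of_mul_eq_mul_left (hr.trans_le hrm) (Nat.add_left_cancel h)

theorem add_sub_div_eq_succ_iff {m r y K : ℕ} (hr : 0 < r) (hrm : r ≤ m) :
    (y + m - r) / m = K + 1 ↔ r + m * K ≤ y ∧ y < r + m * K + m := by
  rw [Nat.div_eq_iff (hr.trans_le hrm), add_mul, one_mul, mul_comm]
  omega

section LogSumResidue

variable {m : ℕ} [NeZero m] (b : ZMod m)

theorem sum_log_residueUpTo_le {y : ℕ} {Y : ℝ} (hY : 1 ≤ Y) (hyY : y ≤ Y) :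
    ∑ k ∈ residueUpTo m b y, Real.log k ≤ (∫ x in (1 : ℝ)..Y, Real.log x) / m + Real.log Y := by
  obtain ⟨r, hr, hrm, rfl⟩ := exists_pos_le_natCast_eq b
  have hm : (0 : ℝ) < m := Nat.cast_pos.2 (hr.trans_le hrm)
  have hr1 : (1 : ℝ) ≤ r := mod_cast hr
  rw [sum_log_residueUpTo_natCast hr hrm]
  rcases hJ : (y + m - r) / m with _ | K
  · rw [range_zero, sum_empty]
    exact add_nonneg (div_nonneg (integral_log_nonneg le_rfl hY) hm.le) (Real.log_nonneg hY)
  · have hle : (r : ℝ) + m * K ≤ Y :=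
      le_trans (mod_cast ((add_sub_div_eq_succ_iff hr hrm).1 hJ).1) hyY
    have hhead : ∑ i ∈ range K, Real.log (r + m * i) ≤ (∫ x in (1 : ℝ)..Y, Real.log x) / m := by
      refine (sum_log_add_mul_le_integral (by positivity) hm K).trans ?_
      gcongr
      rw [← integral_add_adjacent_intervals (a := 1) (b := (r : ℝ)) intervalIntegrable_log'
          intervalIntegrable_log', ← integral_add_adjacent_intervals (b := (r : ℝ) + m * K)
          (c := Y) intervalIntegrable_log' intervalIntegrable_log']
      have h₁ := integral_log_nonneg le_rfl hr1
      have h₂ := integral_log_nonneg (by nlinarith) hle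
      linarith
    rw [sum_range_succ]
    gcongr

theorem le_sum_log_residueUpTo {y : ℕ} (hy : 0 < y) :
    (∫ x in (1 : ℝ)..y, Real.log x) / m - Real.log y ≤ ∑ k ∈ residueUpTo m b y, Real.log k := by
  obtain ⟨r, hr, hrm, rfl⟩ := exists_pos_le_natCast_eq b
  have hm : (0 : ℝ) < m := Nat.cast_pos.2 (hr.trans_le hrm)
  have hr1 : (1 : ℝ) ≤ r := mod_cast hr
  have hrm' : (r : ℝ) ≤ m := mod_cast hrm
  have hy1 : (1 : ℝ) ≤ y := mod_cast hy
  have hlog := Real.log_nonneg hy1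
  rw [sum_log_residueUpTo_natCast hr hrm, sub_le_iff_le_add, div_le_iff₀ hm]
  rcases hJ : (y + m - r) / m with _ | K
  · have hym : (y : ℝ) ≤ m := by
      rw [Nat.div_eq_zero_iff_lt (hr.trans_le hrm)] at hJ
      exact mod_cast (by omega)
    have := integral_log_le one_pos hy1
    rw [range_zero, sum_empty]
    nlinarith
  · obtain ⟨hle, hlt⟩ := (add_sub_div_eq_succ_iff hr hrm).1 hJ
    have hle' : (r : ℝ) + m * K ≤ y := mod_cast hle
    have hlt' : (y : ℝ) ≤ r + m * K + m := mod_cast hlt.le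
    have h₁ : ∫ x in (1 : ℝ)..r, Real.log x ≤ m * Real.log r :=
      (integral_log_le one_pos hr1).trans
        (mul_le_mul_of_nonneg_right (by linarith) (Real.log_nonneg hr1))
    have h₂ := (div_le_iff₀ hm).1 (integral_le_sum_log_add_mul (r := r) (by positivity) hm K)
    have h₃ : ∫ x in (r + m * K : ℝ)..y, Real.log x ≤ m * Real.log y :=
      (integral_log_le (by positivity) hle').trans
        (mul_le_mul_of_nonneg_right (by linarith) hlog)
    rw [sum_range_succ', ← integral_add_adjacent_intervals (b := (r : ℝ)) intervalIntegrable_log'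
      intervalIntegrable_log', ← integral_add_adjacent_intervals (a := (r : ℝ))
      (b := r + m * K) intervalIntegrable_log' intervalIntegrable_log', Nat.cast_zero, mul_zero,
      add_zero]
    linarith

theorem sum_log_residueUpTo_div_le {n k : ℕ} (hk : 0 < k) (hkn : k ≤ n) :
    ∑ j ∈ residueUpTo m b (n / k), Real.log j ≤
      (n * Real.log n / m - n / m) * (1 / k) - n / m * (Real.log k / k) + 1 + Real.log n := by
  have hm : (0 : ℝ) < m := Nat.cast_pos.2 (NeZero.pos m)
  have hk0 : (0 : ℝ) < k := mod_cast hk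
  have hn0 : (0 : ℝ) < n := mod_cast hk.trans_le hkn
  have hlog : Real.log (n / k) ≤ Real.log n := by
    gcongr
    exact div_le_self hn0.le (mod_cast hk)
  have hm1 : 1 / (m : ℝ) ≤ 1 := (div_le_one hm).2 (Nat.one_le_cast.2 (NeZero.pos m))
  have hint : (∫ x in (1 : ℝ)..n / k, Real.log x) / m =
      (n * Real.log n / m - n / m) * (1 / k) - n / m * (Real.log k / k) + 1 / m := by
    rw [integral_log, Real.log_one, Real.log_div hn0.ne' hk0.ne']
    field_simp
    ring
  have h := sum_log_residueUpTo_le b ((one_le_div hk0).2 (mod_cast hkn)) Nat.cast_div_le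
  linarith

end LogSumResidue

theorem sum_log_eq_sum_vonMangoldt_mul_card {S : Finset ℕ} {n : ℕ} (hS : S ⊆ Ioc 0 n) :
    ∑ k ∈ S, Real.log k = ∑ d ∈ Ioc 0 n, Λ d * #{k ∈ S | d ∣ k} := by
  have hlog : ∀ k ∈ S, Real.log k = ∑ d ∈ Ioc 0 n, if d ∣ k then Λ d else 0 := fun k hk => by
    have hkn := mem_Ioc.1 (hS hk)
    rw [← ArithmeticFunction.vonMangoldt_sum, ← sum_filter]
    refine sum_congr (ext fun d => ?_) fun _ _ => rfl
    simp only [Nat.mem_divisors, mem_filter, mem_Ioc]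
    exact ⟨fun h => ⟨⟨Nat.pos_of_dvd_of_pos h.1 hkn.1, (Nat.le_of_dvd hkn.1 h.1).trans hkn.2⟩, h.1⟩,
      fun h => ⟨h.2, hkn.1.ne'⟩⟩
  rw [sum_congr rfl hlog, sum_comm]
  refine sum_congr rfl fun d _ => ?_
  rw [← sum_filter, sum_const, nsmul_eq_mul, mul_comm]

theorem residueUpTo_subset {m : ℕ} {b : ZMod m} {y n : ℕ} (h : y ≤ n) :
    residueUpTo m b y ⊆ Ioc 0 n :=
  (filter_subset _ _).trans (Ioc_subset_Ioc_right h)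

theorem card_filter_dvd_residueUpTo {m d : ℕ} {u : (ZMod m)ˣ} (hd : 0 < d)
    (hu : (d : ZMod m) = u) (b : ZMod m) (y : ℕ) :
    #{k ∈ residueUpTo m b y | d ∣ k} = #(residueUpTo m (↑u⁻¹ * b) (y / d)) := by
  symm
  refine card_bij (fun l _ => d * l) ?_ (fun _ _ _ _ h => Nat.eq_of_mul_eq_mul_left hd h) ?_
  · intro l hl
    simp only [residueUpTo, mem_filter, mem_Ioc, Nat.le_div_iff_mul_le hd] at hl ⊢
    refine ⟨⟨⟨Nat.mul_pos hd hl.1.1, by rw [mul_comm]; exact hl.1.2⟩, ?_⟩, dvd_mul_right d l⟩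
    rw [Nat.cast_mul, hl.2, hu, Units.mul_inv_cancel_left]
  · intro k hk
    simp only [residueUpTo, mem_filter, mem_Ioc] at hk
    obtain ⟨⟨⟨hk0, hky⟩, rfl⟩, l, rfl⟩ := hk
    refine ⟨l, ?_, rfl⟩
    simp only [residueUpTo, mem_filter, mem_Ioc, Nat.le_div_iff_mul_le hd]
    refine ⟨⟨Nat.pos_of_mul_pos_left hk0, by rwa [mul_comm]⟩, ?_⟩
    rw [Nat.cast_mul, hu, Units.inv_mul_cancel_left]

/-- A finite family `F` of pairs (residue, divisor) whose residue counting functions dominate that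
of any unit class `c`, up to an error `1` that is allowed only when `c = 1` or `L ≤ z`. This is the
analogue modulo `m` of Chebyshev's `⌊z⌋ - ⌊z / 2⌋ - ⌊z / 3⌋ - ⌊z / 5⌋ + ⌊z / 30⌋ ≤ 1`. -/
def IsChebyshevFamily (m L : ℕ) (F : Finset (ZMod m × ℕ)) : Prop :=
  ∀ c : ZMod m, IsUnit c → ∀ z, #(residueUpTo m c z) ≤
    ∑ t ∈ F, #(residueUpTo m (t.1 * c) (z / t.2)) + if c = 1 ∨ L ≤ z then 1 else 0

theorem IsChebyshevFamily.card_filter_dvd_le {m L : ℕ} {F : Finset (ZMod m × ℕ)}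
    (hF : IsChebyshevFamily m L F) {a : ZMod m} (ha : IsUnit a) {d : ℕ} (hd : 0 < d) (n : ℕ) :
    #{k ∈ residueUpTo m a n | d ∣ k} ≤
      ∑ t ∈ F, #{k ∈ residueUpTo m (t.1 * a) (n / t.2) | d ∣ k} +
        if (d : ZMod m) = a ∨ L * d ≤ n then 1 else 0 := by
  by_cases hu : IsUnit (d : ZMod m)
  · obtain ⟨u, hu⟩ := hu
    have h := hF (↑u⁻¹ * a) (u⁻¹.isUnit.mul ha) (n / d)
    simp only [Units.inv_mul_eq_one, hu, Nat.le_div_iff_mul_le hd] at h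
    simp only [card_filter_dvd_residueUpTo hd hu.symm, Nat.div_right_comm n _ d,
      mul_left_comm (↑u⁻¹ : ZMod m)]
    exact h
  · rw [card_eq_zero.2 (filter_eq_empty_iff.2 fun k hk hdk => hu ?_)]
    · exact Nat.zero_le _
    · exact isUnit_of_dvd_unit (Nat.cast_dvd_cast hdk) ((mem_filter.1 hk).2 ▸ ha)

/-- The primes `p ≡ a` modulo `m` with `n / L < p ≤ n`. -/
def largeClassPrimes (m L : ℕ) (a : ZMod m) (n : ℕ) : Finset ℕ :=
  {p ∈ residueUpTo m a n | p.Prime ∧ n < L * p}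

theorem sum_vonMangoldt_ite_le {m L : ℕ} (hL : 0 < L) (a : ZMod m) (n : ℕ) :
    ∑ d ∈ Ioc 0 n, Λ d * (if (d : ZMod m) = a ∨ L * d ≤ n then 1 else 0 : ℕ) ≤
      ∑ p ∈ largeClassPrimes m L a n, Real.log p + θ (n / L) + (ψ n - θ n) := by
  have hsmall : {p ∈ Ioc 0 ⌊(n / L : ℝ)⌋₊ | p.Prime} = {p ∈ Ioc 0 n | p.Prime ∧ L * p ≤ n} := by
    ext p
    simp only [Nat.floor_div_natCast, Nat.floor_natCast, mem_filter, mem_Ioc,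
      Nat.le_div_iff_mul_le hL, mul_comm p]
    have := Nat.le_mul_of_pos_left p hL
    grind
  rw [Chebyshev.psi_sub_theta_eq_sum_not_prime, Chebyshev.theta, hsmall, Nat.floor_natCast,
    largeClassPrimes, residueUpTo, filter_filter, sum_filter, sum_filter, sum_filter,
    ← sum_add_distrib, ← sum_add_distrib]
  refine sum_le_sum fun d _ => ?_
  by_cases hp : d.Prime
  · rw [ArithmeticFunction.vonMangoldt_apply_prime hp]
    by_cases h1 : (d : ZMod m) = a <;> by_cases h2 : L * d ≤ n <;>
      simp [hp, h1, h2, not_lt.2, not_le.1]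
  · have h0 := ArithmeticFunction.vonMangoldt_nonneg (n := d)
    by_cases h : (d : ZMod m) = a ∨ L * d ≤ n <;> simp [hp, h, h0]

theorem IsChebyshevFamily.sum_log_sub_le {m L : ℕ} {F : Finset (ZMod m × ℕ)}
    (hF : IsChebyshevFamily m L F) (hL : 0 < L) {a : ZMod m} (ha : IsUnit a) (n : ℕ) :
    ∑ k ∈ residueUpTo m a n, Real.log k -
        ∑ t ∈ F, ∑ k ∈ residueUpTo m (t.1 * a) (n / t.2), Real.log k ≤
      ∑ p ∈ largeClassPrimes m L a n, Real.log p + θ (n / L) + (ψ n - θ n) := by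
  refine le_trans ?_ (sum_vonMangoldt_ite_le hL a n)
  rw [sub_le_iff_le_add', sum_log_eq_sum_vonMangoldt_mul_card (residueUpTo_subset le_rfl),
    sum_congr rfl fun t _ =>
      sum_log_eq_sum_vonMangoldt_mul_card (residueUpTo_subset (Nat.div_le_self n t.2)),
    sum_comm, ← sum_add_distrib]
  refine sum_le_sum fun d hd => ?_
  rw [← mul_sum, ← mul_add]
  exact mul_le_mul_of_nonneg_left (mod_cast hF.card_filter_dvd_le ha (mem_Ioc.1 hd).1 n)
    ArithmeticFunction.vonMangoldt_nonneg

theorem IsChebyshevFamily.le_sum_log_largeClassPrimes {m L : ℕ} [NeZero m]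
    {F : Finset (ZMod m × ℕ)} (hF : IsChebyshevFamily m L F) (hL : 0 < L)
    (hsum : ∑ t ∈ F, (1 / t.2 : ℝ) = 1) {a : ZMod m} (ha : IsUnit a) {n : ℕ} (hn : 0 < n)
    (hFn : ∀ t ∈ F, 0 < t.2 ∧ t.2 ≤ n) :
    n / m * ∑ t ∈ F, Real.log t.2 / t.2 - (1 + #F) * (1 + Real.log n) - Real.log 4 * (n / L) -
        2 * √n * Real.log n ≤
      ∑ p ∈ largeClassPrimes m L a n, Real.log p := by
  have hn1 : (1 : ℝ) ≤ n := mod_cast hn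
  have hmain := hF.sum_log_sub_le hL ha n
  have htheta := Chebyshev.theta_le_log4_mul_x (x := (n / L : ℝ)) (by positivity)
  have hpsi := Chebyshev.psi_sub_theta_le hn1
  have hlower := le_sum_log_residueUpTo a hn
  have hupper := sum_le_sum fun t ht =>
    sum_log_residueUpTo_div_le (t.1 * a) (hFn t ht).1 (hFn t ht).2
  simp only [sum_add_distrib, sum_sub_distrib, ← mul_sum, hsum, sum_const, nsmul_eq_mul] at hupper
  rw [integral_log, Real.log_one] at hlower
  have hdiv : (n * Real.log n - 1 * 0 - n + 1) / m = n * Real.log n / m - n / m + 1 / m := by ring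
  have hinv : 0 ≤ 1 / (m : ℝ) := by positivity
  linarith

theorem card_residueUpTo_add_mul {m : ℕ} [NeZero m] (b : ZMod m) (y j : ℕ) :
    #(residueUpTo m b (y + m * j)) = #(residueUpTo m b y) + j := by
  obtain ⟨r, hr, hrm, rfl⟩ := exists_pos_le_natCast_eq b
  rw [card_residueUpTo_natCast hr hrm, card_residueUpTo_natCast hr hrm,
    ← Nat.add_mul_div_left _ _ (hr.trans_le hrm)]
  congr 1
  omega

theorem isChebyshevFamily_of_forall_lt {m L P : ℕ} [NeZero m] {F : Finset (ZMod m × ℕ)}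
    (hP : 0 < P) (hmP : m ∣ P) (hF : ∀ t ∈ F, 0 < t.2 ∧ t.2 * m ∣ P)
    (hsum : ∑ t ∈ F, P / (t.2 * m) = P / m)
    (h : ∀ c : ZMod m, IsUnit c → ∀ z < P, #(residueUpTo m c z) ≤
      ∑ t ∈ F, #(residueUpTo m (t.1 * c) (z / t.2)) + if c = 1 ∨ L ≤ z then 1 else 0) :
    IsChebyshevFamily m L F := by
  intro c hc z
  have hz : z = z % P + m * (P / m * (z / P)) := by
    rw [← mul_assoc, Nat.mul_div_cancel' hmP, Nat.mod_add_div]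
  have hzt : ∀ t ∈ F, #(residueUpTo m (t.1 * c) (z / t.2)) =
      #(residueUpTo m (t.1 * c) (z % P / t.2)) + P / (t.2 * m) * (z / P) := fun t ht => by
    obtain ⟨ht0, j, hj⟩ := hF t ht
    have hPj : P / (t.2 * m) = j := by
      rw [hj, Nat.mul_div_cancel_left _ (Nat.mul_pos ht0 (NeZero.pos m))]
    rw [← card_residueUpTo_add_mul, hPj, ← Nat.add_mul_div_left _ _ ht0]
    congr 2
    conv_lhs => rw [← Nat.mod_add_div z P]
    rw [hj]
    ring_nf
  rw [sum_congr rfl hzt, sum_add_distrib, ← sum_mul, hsum, hz, card_residueUpTo_add_mul, ← hz]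
  have hstep := h c hc (z % P) (Nat.mod_lt z hP)
  have hle : (if c = 1 ∨ L ≤ z % P then 1 else 0) ≤ if c = 1 ∨ L ≤ z then 1 else 0 := by
    have := Nat.mod_le z P
    split_ifs <;> grind
  omega

/-- A Chebyshev family modulo `12`. The reciprocals of its divisors satisfy
`3 * (1 / 4) + 3 * (1 / 12) = 1`, so its counting inequality has period `12 * 12` in `z`. -/
def chebyshevFamilyTwelve : Finset (ZMod 12 × ℕ) :=
  {(5, 4), (7, 4), (11, 4), (1, 12), (5, 12), (7, 12)}

theorem isChebyshevFamily_twelve : IsChebyshevFamily 12 41 chebyshevFamilyTwelve := by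
  refine isChebyshevFamily_of_forall_lt (P := 144) ?_ ?_ ?_ ?_ ?_ <;> decide +kernel

/-- A majorant of `progressionWeight (12 * q ^ 2)` at primes `q ≥ 5`: the coefficient `9 / 4` comes
from `2 * log q + log q / (q - 1) ≤ (2 + 1 / 4) * log q`. -/
noncomputable def squareWeight (t : ℝ) : ℝ :=
  Real.log 12 + Real.log 2 + Real.log 3 / 2 + 9 / 4 * Real.log t

theorem primeFactors_twelve_mul_sq {q : ℕ} (hq : q.Prime) :
    (12 * q ^ 2).primeFactors = {2, 3, q} := by
  have h12 : Nat.primeFactors 12 = {2, 3} := by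
    rw [show 12 = 2 ^ 2 * 3 by rfl, Nat.primeFactors_mul (by norm_num) (by norm_num),
      Nat.primeFactors_prime_pow two_ne_zero Nat.prime_two, Nat.prime_three.primeFactors]
    rfl
  rw [Nat.primeFactors_mul (by norm_num) (pow_ne_zero 2 hq.ne_zero), h12,
    Nat.primeFactors_prime_pow two_ne_zero hq]
  rfl

theorem progressionWeight_twelve_mul_sq_le {q : ℕ} (hq : q.Prime) (h5 : 5 ≤ q) :
    progressionWeight (12 * q ^ 2) ≤ squareWeight q := by
  have hq5 : (5 : ℝ) ≤ q := mod_cast h5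
  have hle : Real.log q / (q - 1) ≤ Real.log q / 4 :=
    div_le_div_of_nonneg_left (Real.log_natCast_nonneg q) (by norm_num) (by linarith)
  rw [progressionWeight, squareWeight, primeFactors_twelve_mul_sq hq,
    sum_insert (by simp; omega), sum_insert (by simp; omega), sum_singleton, Nat.cast_mul,
    Nat.cast_pow, Real.log_mul (by norm_num) (by positivity), Real.log_pow]
  norm_num
  linarith

theorem mul_log_natCast_le_of_pow_le_pow {a b k l : ℕ} (ha : 0 < a) (h : a ^ k ≤ b ^ l) :
    k * Real.log a ≤ l * Real.log b := by
  rw [← Real.log_pow, ← Real.log_pow]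
  exact Real.log_le_log (by positivity) (mod_cast h)

theorem log_three_le : Real.log 3 ≤ 8 / 5 * Real.log 2 := by
  have := mul_log_natCast_le_of_pow_le_pow (a := 3) (b := 2) (k := 5) (l := 8) (by simp) (by simp)
  norm_num at this
  linarith

theorem le_log_three : 19 / 12 * Real.log 2 ≤ Real.log 3 := by
  have := mul_log_natCast_le_of_pow_le_pow (a := 2) (b := 3) (k := 19) (l := 12) (by simp) (by simp)
  norm_num at this
  linarith

theorem log_twelve : Real.log 12 = 2 * Real.log 2 + Real.log 3 := by
  rw [show (12 : ℝ) = 4 * 3 by norm_num, Real.log_mul (by norm_num) (by norm_num), Real.log_four_eq]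

theorem squareWeight_le (t : ℝ) : squareWeight t ≤ 27 / 5 * Real.log 2 + 9 / 4 * Real.log t := by
  rw [squareWeight, log_twelve]
  linarith [log_three_le]

theorem three_le_squareWeight {t : ℝ} (ht : 1 ≤ t) : 3 ≤ squareWeight t := by
  rw [squareWeight, log_twelve]
  linarith [le_log_three, Real.log_two_gt_d9, Real.log_nonneg ht]

theorem squareWeight_div_sq_nonneg {q : ℕ} (hq : 0 < q) : 0 ≤ squareWeight q / (q : ℝ) ^ 2 :=
  div_nonneg (by linarith [three_le_squareWeight (Nat.one_le_cast.2 hq)]) (sq_nonneg _)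

/-- An antiderivative of `-squareWeight t / t ^ 2`, used to bound tails of sums by telescoping. -/
noncomputable def squareWeightTail (t : ℝ) : ℝ := (squareWeight t + 9 / 4) / t

theorem squareWeight_div_sq_le {t : ℝ} (ht : 10 ≤ t) :
    squareWeight t / t ^ 2 ≤ (squareWeightTail (t - 2) - squareWeightTail t) / 2 := by
  have hu : 0 < t - 2 := by linarith
  have hw := three_le_squareWeight (by linarith : 1 ≤ t)
  have hlog : Real.log t - Real.log (t - 2) ≤ 2 / (t - 2) := by
    rw [← Real.log_div (by linarith) hu.ne']
    refine (Real.log_le_sub_one_of_pos (by positivity)).trans_eq ?_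
    field_simp
    ring
  have hwu : squareWeight t - 9 / 4 * (2 / (t - 2)) ≤ squareWeight (t - 2) := by
    rw [squareWeight, squareWeight]
    linarith
  have htail : (squareWeight t - 9 / 4 * (2 / (t - 2)) + 9 / 4) / (t - 2) ≤
      squareWeightTail (t - 2) := by
    rw [squareWeightTail]
    gcongr
  have hid : ((squareWeight t - 9 / 4 * (2 / (t - 2)) + 9 / 4) / (t - 2) - squareWeightTail t) / 2 -
      squareWeight t / t ^ 2 =
      (2 * squareWeight t * (t - 2) - 9 / 2 * t) / (t ^ 2 * (t - 2) ^ 2) := by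
    rw [squareWeightTail]
    field_simp
    ring
  have hnonneg : 0 ≤ (2 * squareWeight t * (t - 2) - 9 / 2 * t) / (t ^ 2 * (t - 2) ^ 2) :=
    div_nonneg (by nlinarith) (by positivity)
  linarith

theorem sum_squareWeight_odd_le (K : ℕ) :
    ∑ i ∈ range K, squareWeight (37 + 2 * i : ℕ) / ((37 + 2 * i : ℕ) : ℝ) ^ 2 ≤ 21 / 100 := by
  have hstep : ∀ i ∈ range K, squareWeight (37 + 2 * i : ℕ) / ((37 + 2 * i : ℕ) : ℝ) ^ 2 ≤
      (squareWeightTail (35 + 2 * i) - squareWeightTail (35 + 2 * (i + 1 : ℕ))) / 2 := fun i _ => by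
    have h := squareWeight_div_sq_le (t := (37 + 2 * i : ℕ)) (by norm_cast; omega)
    convert h using 4 <;> push_cast <;> ring
  have hpos : 0 ≤ squareWeightTail (35 + 2 * K) :=
    div_nonneg (by linarith [three_le_squareWeight (t := 35 + 2 * K) (by norm_cast; omega)])
      (by positivity)
  have hfirst : squareWeightTail 35 ≤ 21 / 50 := by
    have := mul_log_natCast_le_of_pow_le_pow (a := 35) (b := 2) (k := 4) (l := 21) (by simp)
      (by simp)
    norm_num at this
    rw [squareWeightTail, div_le_iff₀ (by norm_num)]
    linarith [squareWeight_le 35, Real.log_two_lt_d9]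
  refine (sum_le_sum hstep).trans ?_
  rw [← sum_div, sum_range_sub' fun i : ℕ => squareWeightTail (35 + 2 * i)]
  norm_num
  linarith

theorem squareWeight_div_sq_le_of_pow_le {q l : ℕ} (hq : 0 < q) (h : q ^ 6 ≤ 2 ^ l) :
    squareWeight q / (q : ℝ) ^ 2 ≤ (27 / 5 + 3 / 8 * l) / (q : ℝ) ^ 2 * Real.log 2 := by
  have hlog := mul_log_natCast_le_of_pow_le_pow hq h
  rw [div_mul_eq_mul_div]
  push_cast at hlog
  gcongr
  linarith [squareWeight_le q]

/-- The primes `5 ≤ q < 37`, whose contributions are estimated one by one. -/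
def headPrimes : Finset ℕ := {5, 7, 11, 13, 17, 19, 23, 29, 31}

theorem sum_squareWeight_headPrimes_le :
    ∑ q ∈ headPrimes, squareWeight q / (q : ℝ) ^ 2 ≤ 71 / 100 := by
  have h5 := squareWeight_div_sq_le_of_pow_le (q := 5) (l := 14) (by simp) (by simp)
  have h7 := squareWeight_div_sq_le_of_pow_le (q := 7) (l := 17) (by simp) (by simp)
  have h11 := squareWeight_div_sq_le_of_pow_le (q := 11) (l := 21) (by simp) (by simp)
  have h13 := squareWeight_div_sq_le_of_pow_le (q := 13) (l := 23) (by simp) (by simp)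
  have h17 := squareWeight_div_sq_le_of_pow_le (q := 17) (l := 25) (by simp) (by simp)
  have h19 := squareWeight_div_sq_le_of_pow_le (q := 19) (l := 26) (by simp) (by simp)
  have h23 := squareWeight_div_sq_le_of_pow_le (q := 23) (l := 28) (by simp) (by simp)
  have h29 := squareWeight_div_sq_le_of_pow_le (q := 29) (l := 30) (by simp) (by simp)
  have h31 := squareWeight_div_sq_le_of_pow_le (q := 31) (l := 30) (by simp) (by simp)
  rw [headPrimes]
  repeat rw [sum_insert (by decide)]
  rw [sum_singleton]
  norm_num at *
  linarith [Real.log_two_lt_d9]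

theorem sum_squareWeight_div_sq_le (s : ℕ) :
    ∑ q ∈ Icc 5 s with q.Prime, squareWeight q / (q : ℝ) ^ 2 ≤ 23 / 25 := by
  set tail := (range s).image (fun i => 37 + 2 * i) with htail
  have hsub : {q ∈ Icc 5 s | q.Prime} ⊆ headPrimes ∪ tail := fun q hq => by
    simp only [mem_filter, mem_Icc] at hq
    obtain ⟨⟨h5, hqs⟩, hp⟩ := hq
    rw [mem_union, htail, mem_image]
    rcases lt_or_ge q 37 with h | h
    · exact .inl (by clear htail tail hqs; interval_cases q <;> revert hp <;> decide)
    · have hodd := hp.eq_two_or_odd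
      exact .inr ⟨(q - 37) / 2, by rw [mem_range]; omega, by omega⟩
  have hge : ∀ q ∈ headPrimes ∪ tail, 0 < q := fun q hq => by
    simp only [headPrimes, htail, mem_union, mem_image, mem_insert, mem_singleton] at hq
    omega
  have hdisj : Disjoint headPrimes tail := disjoint_left.2 fun q hq hq' => by
    simp only [headPrimes, htail, mem_image, mem_insert, mem_singleton] at hq hq'
    omega
  calc ∑ q ∈ Icc 5 s with q.Prime, squareWeight q / (q : ℝ) ^ 2
      ≤ ∑ q ∈ headPrimes ∪ tail, squareWeight q / (q : ℝ) ^ 2 :=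
        sum_le_sum_of_subset_of_nonneg hsub fun q hq _ => squareWeight_div_sq_nonneg (hge q hq)
    _ = ∑ q ∈ headPrimes, squareWeight q / (q : ℝ) ^ 2 +
        ∑ i ∈ range s, squareWeight (37 + 2 * i : ℕ) / ((37 + 2 * i : ℕ) : ℝ) ^ 2 := by
        rw [sum_union hdisj, htail, sum_image fun i _ j _ h => by omega]
    _ ≤ 71 / 100 + 21 / 100 :=
        add_le_add sum_squareWeight_headPrimes_le (sum_squareWeight_odd_le s)
    _ = 23 / 25 := by norm_num

theorem sum_squareWeight_le (n : ℕ) :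
    ∑ q ∈ Icc 5 n.sqrt with q.Prime, squareWeight q ≤
      √n * (27 / 5 * Real.log 2 + 9 / 8 * Real.log n) := by
  have hterm : ∀ q ∈ {q ∈ Icc 5 n.sqrt | q.Prime},
      squareWeight q ≤ 27 / 5 * Real.log 2 + 9 / 8 * Real.log n := fun q hq => by
    obtain ⟨hq, hp⟩ := mem_filter.1 hq
    have hlog := mul_log_natCast_le_of_pow_le_pow (k := 2) (l := 1) hp.pos
      (by simpa using Nat.le_sqrt'.1 (mem_Icc.1 hq).2)
    push_cast at hlog
    linarith [squareWeight_le q]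
  have hcard : (#{q ∈ Icc 5 n.sqrt | q.Prime} : ℝ) ≤ √n :=
    (Nat.cast_le.2 ((card_filter_le _ _).trans (by simp))).trans Real.nat_sqrt_le_real_sqrt
  refine (sum_le_card_nsmul _ _ _ hterm).trans ?_
  rw [nsmul_eq_mul]
  have := Real.log_natCast_nonneg n
  gcongr

theorem squareWeight_bound_lt_largeClassPrimes_bound {n : ℕ} (hn : 2 ^ 22 ≤ n) :
    (n : ℝ) / 12 * (23 / 25) + √n * (27 / 5 * Real.log 2 + 9 / 8 * Real.log n) <
      n / 12 * (3 / 4 * Real.log 4 + 1 / 4 * Real.log 12) - 7 * (1 + Real.log n) -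
        Real.log 4 * (n / 41) - 2 * √n * Real.log n := by
  set s := √(n : ℝ)
  have hsq : (n : ℝ) = s ^ 2 := (Real.sq_sqrt n.cast_nonneg).symm
  have hs1 : 2048 ≤ s := Real.le_sqrt_of_sq_le (by norm_num; exact_mod_cast hn)
  have hlogn : Real.log n = 2 * Real.log s := by rw [hsq, Real.log_pow, Nat.cast_ofNat]
  -- The tangent of `log` at `2 ^ 11` gives a slope just above `log 2048 / 2048`.
  have hlog : Real.log s ≤ 0.003724 * s := by
    have h := Real.log_le_sub_one_of_pos (show 0 < s / 2 ^ 11 by positivity)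
    rw [Real.log_div (by positivity) (by norm_num), Real.log_pow] at h
    norm_num at h
    linarith [Real.log_two_lt_d9]
  rw [Real.log_four_eq, log_twelve, hlogn, hsq]
  have hslog : s * Real.log s ≤ 0.003724 * s ^ 2 := by nlinarith
  have hsq2 : 0.6931471803 * s ^ 2 ≤ s ^ 2 * Real.log 2 := by
    nlinarith [Real.log_two_gt_d9, sq_nonneg s]
  have hsq3 : 19 / 12 * (s ^ 2 * Real.log 2) ≤ s ^ 2 * Real.log 3 := by
    nlinarith [le_log_three, sq_nonneg s]
  have hs2 : s * Real.log 2 ≤ 0.6931471808 * s := by nlinarith [Real.log_two_lt_d9]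
  have hss : 2048 * s ≤ s ^ 2 := by nlinarith
  linarith

theorem le_sum_log_largeClassPrimes_twelve {a : ZMod 12} (ha : IsUnit a) {n : ℕ}
    (hn : 12 ≤ n) :
    n / 12 * (3 / 4 * Real.log 4 + 1 / 4 * Real.log 12) - 7 * (1 + Real.log n) -
        Real.log 4 * (n / 41) - 2 * √n * Real.log n ≤
      ∑ p ∈ largeClassPrimes 12 41 a n, Real.log p := by
  have hexp : ∀ f : ℕ → ℝ, ∑ t ∈ chebyshevFamilyTwelve, f t.2 = 3 * f 4 + 3 * f 12 := fun f => by
    rw [chebyshevFamilyTwelve]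
    repeat rw [sum_insert (by decide)]
    rw [sum_singleton]
    ring
  have hcard : #chebyshevFamilyTwelve = 6 := by decide
  have hsnd : ∀ t ∈ chebyshevFamilyTwelve, 0 < t.2 ∧ t.2 ≤ 12 := by decide
  have h := isChebyshevFamily_twelve.le_sum_log_largeClassPrimes (by norm_num)
    (by rw [hexp fun k => (1 / k : ℝ)]; norm_num) ha (by omega)
    fun t ht => ⟨(hsnd t ht).1, (hsnd t ht).2.trans hn⟩
  rw [hexp fun k => Real.log k / k, hcard] at h
  norm_num at h ⊢
  linarith

theorem sum_log_largeClassPrimes_dvd_le {m L d : ℕ} [NeZero m] (hcop : m.Coprime d) (hd : 0 < d)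
    (hL : 2 * L ≤ m * d) (a : ZMod m) (n : ℕ) :
    ∑ p ∈ largeClassPrimes m L a n with d ∣ n - p, Real.log p ≤
      ((n : ℝ) / (m * d : ℕ) + 1) * progressionWeight (m * d) := by
  obtain ⟨k, hka, hkn⟩ := Nat.chineseRemainder hcop a.val n
  have hmem : ∀ p ∈ {p ∈ largeClassPrimes m L a n | d ∣ n - p},
      p.Prime ∧ p ≡ k [MOD m * d] ∧ p ≤ n ∧ n / (m * d) + 1 < p := fun p hp => by
    simp only [largeClassPrimes, residueUpTo, mem_filter, mem_Ioc] at hp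
    obtain ⟨⟨⟨⟨_, hpn⟩, hpa⟩, hprime, hlt⟩, hdvd⟩ := hp
    refine ⟨hprime, (Nat.modEq_and_modEq_iff_modEq_mul hcop).1 ⟨?_, ?_⟩, hpn, ?_⟩
    · refine Nat.ModEq.trans ((ZMod.natCast_eq_natCast_iff _ _ _).1 ?_) hka.symm
      rw [hpa, ZMod.natCast_zmod_val]
    · exact ((Nat.modEq_iff_dvd' hpn).2 hdvd).trans hkn.symm
    · have hdiv : n / (m * d) * (2 * L) ≤ n :=
        (Nat.mul_le_mul_left _ hL).trans (Nat.div_mul_le_self _ _)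
      have hp2 := hprime.two_le
      have hlt' : 2 * (n / (m * d)) < p := by
        refine Nat.lt_of_mul_lt_mul_left (a := L) ?_
        linarith
      omega
  exact sum_log_primes_le_of_modEq (Nat.mul_pos (NeZero.pos m) hd) (fun p hp => (hmem p hp).1)
    (fun p hp => (hmem p hp).2.1) (fun p hp => (hmem p hp).2.2.1) fun p hp => (hmem p hp).2.2.2

theorem coprime_twelve_of_prime_of_five_le {q : ℕ} (hq : q.Prime) (h5 : 5 ≤ q) :
    Nat.Coprime 12 q := by
  refine (hq.coprime_iff_not_dvd.2 fun h => ?_).symm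
  rcases (hq.dvd_mul (m := 4) (n := 3)).1 h with h | h
  all_goals exact absurd (Nat.le_of_dvd (by norm_num) h) (by omega)

theorem sum_log_largeClassPrimes_sq_dvd_le {q : ℕ} (hq : q.Prime) (h5 : 5 ≤ q) (a : ZMod 12)
    (n : ℕ) :
    ∑ p ∈ largeClassPrimes 12 41 a n with q ^ 2 ∣ n - p, Real.log p ≤
      n / 12 * (squareWeight q / (q : ℝ) ^ 2) + squareWeight q := by
  have h := sum_log_largeClassPrimes_dvd_le (L := 41)
    ((coprime_twelve_of_prime_of_five_le hq h5).pow_right 2) (by positivity) (by nlinarith) a n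
  calc _ ≤ ((n : ℝ) / (12 * q ^ 2 : ℕ) + 1) * squareWeight q := h.trans (by
        gcongr
        exact progressionWeight_twelve_mul_sq_le hq h5)
    _ = _ := by
        push_cast
        field_simp

theorem sum_le_sum_sum_filter_of_forall_exists {ι κ M : Type*} [AddCommMonoid M] [PartialOrder M]
    [IsOrderedAddMonoid M] {S : Finset ι} {Q : Finset κ} {r : κ → ι → Prop}
    [∀ q, DecidablePred (r q)] {f : ι → M} (hf : ∀ i ∈ S, 0 ≤ f i)
    (h : ∀ i ∈ S, ∃ q ∈ Q, r q i) : ∑ i ∈ S, f i ≤ ∑ q ∈ Q, ∑ i ∈ S with r q i, f i := by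
  simp_rw [sum_filter]
  rw [sum_comm]
  refine sum_le_sum fun i hi => ?_
  obtain ⟨q, hq, hr⟩ := h i hi
  calc f i = if r q i then f i else 0 := (if_pos hr).symm
    _ ≤ ∑ q ∈ Q, if r q i then f i else 0 :=
        single_le_sum (f := fun q => if r q i then f i else 0)
          (fun _ _ => ite_nonneg (hf i hi) le_rfl) hq

theorem exists_prime_sq_dvd_of_not_squarefree {k n : ℕ} (hkn : k ≤ n) (h3 : ¬3 ∣ k) (h4 : ¬4 ∣ k)
    (hk : ¬Squarefree k) : ∃ q ∈ {q ∈ Icc 5 n.sqrt | q.Prime}, q ^ 2 ∣ k := by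
  rw [Nat.squarefree_iff_prime_squarefree] at hk
  push Not at hk
  obtain ⟨q, hq, hdvd⟩ := hk
  have hk0 : 0 < k := Nat.pos_of_ne_zero fun h => h3 (h ▸ dvd_zero 3)
  have h5 : 5 ≤ q := by
    by_contra! hlt
    interval_cases q
    all_goals first | omega | exact absurd hq (by norm_num)
  rw [← sq] at hdvd
  refine ⟨q, mem_filter.2 ⟨mem_Icc.2 ⟨h5, Nat.le_sqrt'.2 ?_⟩, hq⟩, hdvd⟩
  exact (Nat.le_of_dvd hk0 hdvd).trans hkn

theorem exists_isUnit_zmod_twelve_not_dvd_sub (n : ℕ) : ∃ a : ZMod 12, IsUnit a ∧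
    ∀ p ≤ n, (p : ZMod 12) = a → ¬3 ∣ n - p ∧ ¬4 ∣ n - p := by
  have hclass : ∀ x : ZMod 12, ∃ a, IsUnit a ∧ 4 * (x - a) ≠ 0 ∧ 3 * (x - a) ≠ 0 := by decide
  -- Multiplying by `4` or `3` expresses divisibility by `3` or `4` inside `ZMod 12`.
  obtain ⟨a, ha, h3, h4⟩ := hclass n
  refine ⟨a, ha, fun p hp hpa => ?_⟩
  rw [← hpa, ← Nat.cast_sub hp] at h3 h4
  refine ⟨fun h => h3 ?_, fun h => h4 ?_⟩
  · exact_mod_cast (ZMod.natCast_eq_zero_iff _ _).2 (Nat.mul_dvd_mul_left 4 h)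
  · exact_mod_cast (ZMod.natCast_eq_zero_iff _ _).2 (Nat.mul_dvd_mul_left 3 h)

theorem exists_prime_add_squarefree_of_two_pow_le {n : ℕ} (hn : 2 ^ 22 ≤ n) :
    ∃ p k : ℕ, p.Prime ∧ Squarefree k ∧ n = p + k := by
  by_contra hcon
  obtain ⟨a, ha, hdvd⟩ := exists_isUnit_zmod_twelve_not_dvd_sub n
  have hcover : ∀ p ∈ largeClassPrimes 12 41 a n,
      ∃ q ∈ {q ∈ Icc 5 n.sqrt | q.Prime}, q ^ 2 ∣ n - p := fun p hp => by
    simp only [largeClassPrimes, residueUpTo, mem_filter, mem_Ioc] at hp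
    obtain ⟨⟨⟨_, hpn⟩, hpa⟩, hprime, _⟩ := hp
    obtain ⟨h3, h4⟩ := hdvd p hpn hpa
    exact exists_prime_sq_dvd_of_not_squarefree (Nat.sub_le n p) h3 h4 fun hsq =>
      hcon ⟨p, n - p, hprime, hsq, (Nat.add_sub_cancel' hpn).symm⟩
  have hupper : ∑ p ∈ largeClassPrimes 12 41 a n, Real.log p ≤
      n / 12 * (23 / 25) + √n * (27 / 5 * Real.log 2 + 9 / 8 * Real.log n) := by
    calc ∑ p ∈ largeClassPrimes 12 41 a n, Real.log p
        ≤ ∑ q ∈ Icc 5 n.sqrt with q.Prime,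
            ∑ p ∈ largeClassPrimes 12 41 a n with q ^ 2 ∣ n - p, Real.log p :=
          sum_le_sum_sum_filter_of_forall_exists (fun p _ => Real.log_natCast_nonneg p) hcover
      _ ≤ ∑ q ∈ Icc 5 n.sqrt with q.Prime,
            (n / 12 * (squareWeight q / (q : ℝ) ^ 2) + squareWeight q) := sum_le_sum fun q hq => by
          simp only [mem_filter, mem_Icc] at hq
          exact sum_log_largeClassPrimes_sq_dvd_le hq.2 hq.1.1 a n
      _ ≤ n / 12 * (23 / 25) + √n * (27 / 5 * Real.log 2 + 9 / 8 * Real.log n) := by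
          rw [sum_add_distrib, ← mul_sum]
          gcongr
          · exact sum_squareWeight_div_sq_le _
          · exact sum_squareWeight_le n
  have hlower := le_sum_log_largeClassPrimes_twelve ha (n := n) (by omega)
  linarith [squareWeight_bound_lt_largeClassPrimes_bound hn]

/-- Every integer greater than two can be written as the sum of a prime and a
square-free number. -/
theorem prime_add_squarefree (n : ℕ) (hn : 2 < n) :
    ∃ p k : ℕ, p.Prime ∧ Squarefree k ∧ n = p + k := by
  rcases lt_or_ge n (2 ^ 22) with h | h
  · exact exists_prime_add_squarefree_of_lt_two_pow hn h
  · exact exists_prime_add_squarefree_of_two_pow_le h
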